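/- (Jacobi triple product identity) Let 0<q<1 and z∈ℂ with z≠0. Then Σ_{k=-∞}^∞ (-1)^k q^{k(k-1)/2} z^k = (q;q)_∞ (z;q)_∞ (q/z;q)_∞. -/

import Mathlib

noncomputable section

/-- The infinite q-shifted factorial `(a;q)_∞`. -/
def qpi (q a : ℂ) : ℂ := ∏' j : ℕ, (1 - a * q ^ j)

/-- The term of the theta series: `(-1)^k q^{k(k-1)/2} z^k`, `k ∈ ℤ`. -/
def jtpTerm (q z : ℂ) (k : ℤ) : ℂ := (-1 : ℂ) ^ k * q ^ (k * (k - 1) / 2) * z ^ k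

/-!
Substituting `x = z / q ^ n` and `N = 2 n` in the `q`-binomial theorem
`(x;q)_N = ∑ₘ [N,m]_q (-1)^m q^{m(m-1)/2} x^m` and re-indexing by `m = n + k` gives the finite form
`(z;q)_n (q/z;q)_n = ∑ₖ [2n,n+k]_q (-1)^k q^{k(k-1)/2} z^k`, because `(z/q^n;q)_n` and the terms on
the right acquire the same nonzero monomial factor. As `n → ∞` each coefficient `[2n,n+k]_q` tends
to `1/(q;q)_∞`, and the coefficients are uniformly bounded, so dominated convergence applies.
-/

open Filter Topology

section Algebra

variable {R : Type*} [CommRing R] {K : Type*} [Field K]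

/-- The finite `q`-shifted factorial `(a;q)_n`. -/
def qPoch (q a : R) (n : ℕ) : R := ∏ j ∈ Finset.range n, (1 - a * q ^ j)

@[simp] lemma qPoch_zero (q a : R) : qPoch q a 0 = 1 := Finset.prod_range_zero _

lemma qPoch_succ (q a : R) (n : ℕ) : qPoch q a (n + 1) = qPoch q a n * (1 - a * q ^ n) :=
  Finset.prod_range_succ _ _

lemma qPoch_add (q a : R) (m n : ℕ) :
    qPoch q a (m + n) = qPoch q a m * qPoch q (a * q ^ m) n := by
  simp only [qPoch, Finset.prod_range_add, pow_add, mul_assoc]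

lemma one_sub_mul_pow_ne_zero {q : R} (hq : ¬IsOfFinOrder q) (n : ℕ) : 1 - q * q ^ n ≠ 0 :=
  fun h => hq <| isOfFinOrder_iff_pow_eq_one.mpr
    ⟨n + 1, n.succ_pos, by rw [pow_succ', ← sub_eq_zero.mp h]⟩

/-- The reciprocal `1/(q;q)_m` of a `q`-factorial for `m ∈ ℤ`, taken to be `0` for `m < 0` so that
the `q`-Pascal rule has no boundary cases. -/
def invQPoch (q : K) : ℤ → K
  | (m : ℕ) => (qPoch q q m)⁻¹
  | Int.negSucc _ => 0

@[simp] lemma invQPoch_natCast (q : K) (m : ℕ) : invQPoch q m = (qPoch q q m)⁻¹ := rfl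

@[simp] lemma invQPoch_zero (q : K) : invQPoch q 0 = 1 := by
  simpa using invQPoch_natCast q 0

lemma invQPoch_of_neg (q : K) {m : ℤ} (hm : m < 0) : invQPoch q m = 0 := by
  obtain ⟨n, rfl⟩ := Int.eq_negSucc_of_lt_zero hm
  rfl

lemma invQPoch_sub_one {q : K} (hq : ¬IsOfFinOrder q) (m : ℤ) :
    invQPoch q (m - 1) = (1 - q ^ m) * invQPoch q m := by
  rcases lt_or_ge m 0 with hm | hm
  · rw [invQPoch_of_neg q hm, invQPoch_of_neg q (by lia), mul_zero]
  lift m to ℕ using hm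
  cases m with
  | zero => rw [invQPoch_of_neg q (by simp)]; simp
  | succ n =>
    have hn := one_sub_mul_pow_ne_zero hq n
    rw [Nat.cast_succ, add_sub_cancel_right, ← Nat.cast_succ, zpow_natCast, invQPoch_natCast,
      invQPoch_natCast, qPoch_succ, pow_succ', mul_inv_rev, mul_inv_cancel_left₀ hn]

/-- The Gaussian binomial coefficient `[N,m]_q`, extended by `0` to all `m ∈ ℤ` so that
sums over `m` can be re-indexed freely. When `q` is a root of unity the division by `0` hidden in
`invQPoch` makes it differ from the value of the Gaussian polynomial. -/
def qBinom (q : K) (N : ℕ) (m : ℤ) : K := qPoch q q N * invQPoch q m * invQPoch q (N - m)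

lemma qBinom_zero_left (q : K) (m : ℤ) : qBinom q 0 m = if m = 0 then 1 else 0 := by
  rcases lt_trichotomy m 0 with hm | rfl | hm
  · simp [qBinom, invQPoch_of_neg q hm, hm.ne]
  · simp [qBinom]
  · simp [qBinom, invQPoch_of_neg q (neg_lt_zero.mpr hm), hm.ne']

lemma qBinom_succ {q : K} (hq₀ : q ≠ 0) (hq : ¬IsOfFinOrder q) (N : ℕ) (m : ℤ) :
    qBinom q (N + 1) m = qBinom q N m + q ^ (N + 1 - m) * qBinom q N (m - 1) := by
  have h_sub : invQPoch q (N - m) = (1 - q ^ (N + 1 - m)) * invQPoch q (N + 1 - m) := by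
    rw [← invQPoch_sub_one hq]; ring_nf
  have h_pow : q ^ (N + 1 - m) * q ^ m = q * q ^ N := by
    rw [← zpow_add₀ hq₀, sub_add_cancel, zpow_add_one₀ hq₀, zpow_natCast, mul_comm]
  rw [qBinom, qBinom, qBinom, qPoch_succ, h_sub, invQPoch_sub_one hq, Nat.cast_succ,
    sub_sub_eq_add_sub (N : ℤ) m 1]
  linear_combination qPoch q q N * invQPoch q m * invQPoch q (N + 1 - m) * h_pow

end Algebra

section Theta

variable {q z : ℂ}

lemma jtpTerm_ne_zero (hq₀ : q ≠ 0) (hz : z ≠ 0) (k : ℤ) : jtpTerm q z k ≠ 0 :=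
  mul_ne_zero (mul_ne_zero (zpow_ne_zero _ (by norm_num)) (zpow_ne_zero _ hq₀))
    (zpow_ne_zero _ hz)

@[simp] lemma jtpTerm_zero (q z : ℂ) : jtpTerm q z 0 = 1 := by simp [jtpTerm]

@[simp] lemma jtpTerm_one (q z : ℂ) : jtpTerm q z 1 = -z := by simp [jtpTerm]

lemma jtpTerm_add (hq₀ : q ≠ 0) (hz : z ≠ 0) (m k : ℤ) :
    jtpTerm q z (m + k) = jtpTerm q z m * jtpTerm q (z * q ^ m) k := by
  have h_exp : (m + k) * (m + k - 1) / 2 = m * (m - 1) / 2 + k * (k - 1) / 2 + m * k := by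
    rw [← Int.add_ediv_of_dvd_left (Int.even_mul_pred_self m).two_dvd,
      ← Int.add_mul_ediv_right _ _ two_ne_zero]
    ring_nf
  rw [jtpTerm, jtpTerm, jtpTerm, h_exp, zpow_add₀ hq₀, zpow_add₀ hq₀, zpow_add₀ hz,
    zpow_add₀ (by norm_num), mul_zpow, zpow_mul]
  ring

lemma jtpTerm_add_one (hq₀ : q ≠ 0) (hz : z ≠ 0) (k : ℤ) :
    jtpTerm q z (k + 1) = -(z * q ^ k) * jtpTerm q z k := by
  rw [jtpTerm_add hq₀ hz, jtpTerm_one, mul_comm]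

lemma jtpTerm_neg (hq₀ : q ≠ 0) (k : ℤ) : jtpTerm q z (-k) = jtpTerm q (q / z) k := by
  have h_exp : -k * (-k - 1) / 2 = k * (k - 1) / 2 + k := by
    rw [← Int.add_mul_ediv_right _ _ two_ne_zero]
    ring_nf
  rw [jtpTerm, jtpTerm, h_exp, zpow_add₀ hq₀, div_zpow, zpow_neg, zpow_neg, ← inv_zpow,
    inv_neg_one]
  ring

lemma qPoch_div_pow (hq₀ : q ≠ 0) (hz : z ≠ 0) (n : ℕ) :
    qPoch q (z / q ^ n) n = jtpTerm q (z / q ^ n) n * qPoch q (q / z) n := by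
  induction n with
  | zero => simp
  | succ n ih =>
    have h_shift : z / q ^ (n + 1) * q = z / q ^ n := by
      rw [pow_succ, div_mul_eq_div_div, div_mul_cancel₀ _ hq₀]
    have h_poch : qPoch q (z / q ^ (n + 1)) (n + 1)
        = (1 - z / q ^ (n + 1)) * qPoch q (z / q ^ n) n := by
      rw [add_comm, qPoch_add, pow_one, add_comm 1, h_shift, qPoch_succ]
      simp
    have h_term : jtpTerm q (z / q ^ (n + 1)) (n + 1 : ℕ)
        = -(z / q ^ (n + 1)) * jtpTerm q (z / q ^ n) n := by
      rw [Nat.cast_succ, add_comm (n : ℤ), jtpTerm_add hq₀ (div_ne_zero hz (pow_ne_zero _ hq₀)),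
        jtpTerm_one, zpow_one, h_shift]
    rw [h_poch, h_term, ih, qPoch_succ]
    field_simp
    ring

theorem hasSum_qBinom_mul_jtpTerm (hq₀ : q ≠ 0) (hq : ¬IsOfFinOrder q) (hz : z ≠ 0) (N : ℕ) :
    HasSum (fun m => qBinom q N m * jtpTerm q z m) (qPoch q z N) := by
  induction N with
  | zero =>
    have h := hasSum_single (f := fun m => qBinom q 0 m * jtpTerm q z m) 0 fun m hm => by
      rw [qBinom_zero_left, if_neg hm, zero_mul]
    simpa [qBinom_zero_left] using h
  | succ N ih =>
    have h_shift := ((Equiv.subRight (1 : ℤ)).hasSum_iff.mpr ih).mul_left (-(z * q ^ N))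
    convert ih.add h_shift using 1
    · funext m
      have h_term : q ^ (N + 1 - m) * jtpTerm q z m = -(z * q ^ N) * jtpTerm q z (m - 1) := by
        have h_pow : q ^ (N + 1 - m) * q ^ (m - 1) = q ^ N := by
          rw [← zpow_add₀ hq₀, ← zpow_natCast]; ring_nf
        rw [← h_pow, ← sub_add_cancel m 1, jtpTerm_add_one hq₀ hz]
        ring_nf
      rw [qBinom_succ hq₀ hq, Function.comp_apply, Equiv.subRight_apply]
      linear_combination qBinom q N (m - 1) * h_term
    · rw [qPoch_succ]
      ring

theorem hasSum_qBinom_two_mul_mul_jtpTerm (hq₀ : q ≠ 0) (hq : ¬IsOfFinOrder q) (hz : z ≠ 0)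
    (n : ℕ) :
    HasSum (fun k : ℤ => qBinom q (2 * n) (n + k) * jtpTerm q z k)
      (qPoch q z n * qPoch q (q / z) n) := by
  have hqn : q ^ n ≠ 0 := pow_ne_zero n hq₀
  have hx : z / q ^ n ≠ 0 := div_ne_zero hz hqn
  have h_term (k : ℤ) :
      jtpTerm q (z / q ^ n) (n + k) = jtpTerm q (z / q ^ n) n * jtpTerm q z k := by
    rw [jtpTerm_add hq₀ hx, zpow_natCast, div_mul_cancel₀ z hqn]
  have h_poch : qPoch q (z / q ^ n) (2 * n)
      = jtpTerm q (z / q ^ n) n * (qPoch q z n * qPoch q (q / z) n) := by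
    rw [two_mul, qPoch_add, qPoch_div_pow hq₀ hz, div_mul_cancel₀ z hqn, mul_right_comm, mul_assoc]
  have h := (Equiv.addLeft (n : ℤ)).hasSum_iff.mpr (hasSum_qBinom_mul_jtpTerm hq₀ hq hx (2 * n))
  rw [← hasSum_mul_left_iff (jtpTerm_ne_zero hq₀ hx n), ← h_poch]
  simpa only [Function.comp_def, Equiv.coe_addLeft, h_term, mul_left_comm] using h

end Theta

section Limits

variable {q z : ℂ}

lemma not_isOfFinOrder_of_norm_lt_one (hq : ‖q‖ < 1) : ¬IsOfFinOrder q :=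
  fun h => hq.ne h.norm_eq_one

lemma summable_norm_neg_mul_pow (hq : ‖q‖ < 1) (a : ℂ) : Summable fun j : ℕ => ‖-(a * q ^ j)‖ := by
  simpa only [norm_neg, norm_mul, norm_pow] using
    (summable_geometric_of_lt_one (norm_nonneg q) hq).mul_left ‖a‖

lemma tendsto_qPoch (hq : ‖q‖ < 1) (a : ℂ) : Tendsto (qPoch q a) atTop (𝓝 (qpi q a)) := by
  have h := (multipliable_one_add_of_summable
    (summable_norm_neg_mul_pow hq a)).hasProd.tendsto_prod_nat
  simp only [← sub_eq_add_neg] at h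
  exact h

lemma qpi_self_ne_zero (hq : ‖q‖ < 1) : qpi q q ≠ 0 := by
  have h_factor (j : ℕ) : 1 + -(q * q ^ j) ≠ 0 := by
    simpa only [← sub_eq_add_neg] using
      one_sub_mul_pow_ne_zero (not_isOfFinOrder_of_norm_lt_one hq) j
  simpa only [qpi, ← sub_eq_add_neg] using
    tprod_one_add_ne_zero_of_summable h_factor (summable_norm_neg_mul_pow hq q)

lemma tendsto_inv_qPoch_self (hq : ‖q‖ < 1) :
    Tendsto (fun n => (qPoch q q n)⁻¹) atTop (𝓝 (qpi q q)⁻¹) :=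
  (tendsto_qPoch hq q).inv₀ (qpi_self_ne_zero hq)

lemma tendsto_invQPoch (hq : ‖q‖ < 1) : Tendsto (invQPoch q) atTop (𝓝 (qpi q q)⁻¹) := by
  rw [← Nat.map_cast_int_atTop, tendsto_map'_iff]
  exact tendsto_inv_qPoch_self hq

lemma tendsto_qBinom {ι : Type*} {l : Filter ι} {N : ι → ℕ} {m : ι → ℤ} (hq : ‖q‖ < 1)
    (hm : Tendsto m l atTop) (hNm : Tendsto (fun i => N i - m i) l atTop) :
    Tendsto (fun i => qBinom q (N i) (m i)) l (𝓝 (qpi q q)⁻¹) := by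
  have hN : Tendsto N l atTop := by
    rw [← tendsto_natCast_atTop_iff (R := ℤ)]
    simpa only [add_sub_cancel] using hm.atTop_add_atTop hNm
  have h := (((tendsto_qPoch hq q).comp hN).mul ((tendsto_invQPoch hq).comp hm)).mul
    ((tendsto_invQPoch hq).comp hNm)
  rwa [mul_inv_cancel₀ (qpi_self_ne_zero hq), one_mul] at h

lemma exists_norm_invQPoch_le (hq : ‖q‖ < 1) : ∃ C, ∀ m, ‖invQPoch q m‖ ≤ C := by
  obtain ⟨C, hC⟩ := (tendsto_inv_qPoch_self hq).norm.bddAbove_range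
  refine ⟨C, fun m => ?_⟩
  cases m with
  | ofNat m => exact hC ⟨m, rfl⟩
  | negSucc m => simpa only [invQPoch, norm_zero] using (norm_nonneg _).trans (hC ⟨0, rfl⟩)

lemma exists_norm_qBinom_le (hq : ‖q‖ < 1) : ∃ C, ∀ N m, ‖qBinom q N m‖ ≤ C := by
  obtain ⟨C, hC⟩ := exists_norm_invQPoch_le hq
  obtain ⟨D, hD⟩ := (tendsto_qPoch hq q).norm.bddAbove_range
  have hC₀ : 0 ≤ C := (norm_nonneg _).trans (hC 0)
  have hD₀ : 0 ≤ D := (norm_nonneg _).trans (hD ⟨0, rfl⟩)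
  refine ⟨D * C * C, fun N m => ?_⟩
  rw [qBinom, norm_mul, norm_mul]
  gcongr
  exacts [hD ⟨N, rfl⟩, hC _, hC _]

lemma summable_jtpTerm_natCast (hq₀ : q ≠ 0) (hq : ‖q‖ < 1) (hz : z ≠ 0) :
    Summable fun k : ℕ => jtpTerm q z k := by
  have h_ratio (k : ℕ) : ‖jtpTerm q z (k + 1 : ℕ)‖ / ‖jtpTerm q z k‖ = ‖z‖ * ‖q‖ ^ k := by
    rw [Nat.cast_succ, jtpTerm_add_one hq₀ hz, norm_mul,
      mul_div_cancel_right₀ _ (norm_ne_zero_iff.mpr (jtpTerm_ne_zero hq₀ hz _)), norm_neg, norm_mul,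
      zpow_natCast, norm_pow]
  have h_lim : Tendsto (fun k : ℕ => ‖z‖ * ‖q‖ ^ k) atTop (𝓝 0) := by
    simpa only [mul_zero] using
      (tendsto_pow_atTop_nhds_zero_of_lt_one (norm_nonneg q) hq).const_mul ‖z‖
  exact summable_of_ratio_test_tendsto_lt_one zero_lt_one
    (Eventually.of_forall fun k => jtpTerm_ne_zero hq₀ hz k)
    (h_lim.congr fun k => (h_ratio k).symm)

lemma summable_jtpTerm (hq₀ : q ≠ 0) (hq : ‖q‖ < 1) (hz : z ≠ 0) : Summable (jtpTerm q z) :=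
  .of_nat_of_neg (summable_jtpTerm_natCast hq₀ hq hz) <| by
    simpa only [jtpTerm_neg hq₀] using summable_jtpTerm_natCast hq₀ hq (div_ne_zero hq₀ hz)

theorem tsum_jtpTerm (hq₀ : q ≠ 0) (hq : ‖q‖ < 1) (hz : z ≠ 0) :
    ∑' k, jtpTerm q z k = qpi q q * qpi q z * qpi q (q / z) := by
  obtain ⟨C, hC⟩ := exists_norm_qBinom_le hq
  have h_coeff (k : ℤ) :
      Tendsto (fun n : ℕ => qBinom q (2 * n) (n + k)) atTop (𝓝 (qpi q q)⁻¹) := by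
    refine tendsto_qBinom hq
      (tendsto_atTop_add_const_right _ k tendsto_natCast_atTop_atTop) ?_
    refine (tendsto_atTop_add_const_right _ (-k) tendsto_natCast_atTop_atTop).congr fun n => ?_
    push_cast
    ring
  have h_series : Tendsto (fun n : ℕ => ∑' k : ℤ, qBinom q (2 * n) (n + k) * jtpTerm q z k) atTop
      (𝓝 (∑' k, (qpi q q)⁻¹ * jtpTerm q z k)) :=
    tendsto_tsum_of_dominated_convergence ((summable_jtpTerm hq₀ hq hz).norm.mul_left C)
      (fun k => (h_coeff k).mul_const _)
      (Eventually.of_forall fun n k => by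
        rw [norm_mul]; exact mul_le_mul_of_nonneg_right (hC _ _) (norm_nonneg _))
  have h_product : Tendsto (fun n : ℕ => ∑' k : ℤ, qBinom q (2 * n) (n + k) * jtpTerm q z k) atTop
      (𝓝 (qpi q z * qpi q (q / z))) := by
    have hq_order := not_isOfFinOrder_of_norm_lt_one hq
    simpa only [(hasSum_qBinom_two_mul_mul_jtpTerm hq₀ hq_order hz _).tsum_eq] using
      (tendsto_qPoch hq z).mul (tendsto_qPoch hq (q / z))
  have h_eq := tendsto_nhds_unique h_series h_product
  rwa [tsum_mul_left, inv_mul_eq_iff_eq_mul₀ (qpi_self_ne_zero hq), ← mul_assoc] at h_eq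

end Limits

theorem stmt12_general {q z : ℂ} (hq₀ : q ≠ 0) (hq : ‖q‖ < 1) (hz : z ≠ 0) :
    Summable (fun k : ℕ => jtpTerm q z k) ∧
    Summable (fun k : ℕ => jtpTerm q z (-(k : ℤ) - 1)) ∧
    (∑' k : ℕ, jtpTerm q z k) + (∑' k : ℕ, jtpTerm q z (-(k : ℤ) - 1)) =
      qpi q q * qpi q z * qpi q (q / z) := by
  have h_sum := summable_jtpTerm hq₀ hq hz
  have h_nonneg : Summable fun k : ℕ => jtpTerm q z k := h_sum.comp_injective Nat.cast_injective
  have h_neg : Summable fun k : ℕ => jtpTerm q z (-(k + 1)) :=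
    h_sum.comp_injective fun a b h => by simpa using h
  simp only [← neg_add']
  exact ⟨h_nonneg, h_neg,
    (tsum_of_nat_of_neg_add_one h_nonneg h_neg).symm.trans (tsum_jtpTerm hq₀ hq hz)⟩

/-- Jacobi triple product identity: for `0<q<1` and `z ≠ 0`,
`Σ_{k=-∞}^∞ (-1)^k q^{k(k-1)/2} z^k = (q;q)_∞ (z;q)_∞ (q/z;q)_∞`
(the bilateral sum being the sum of the two one-sided series). -/
theorem stmt12 (q : ℝ) (hq0 : 0 < q) (hq1 : q < 1) (z : ℂ) (hz : z ≠ 0) :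
    Summable (fun k : ℕ => jtpTerm (q : ℂ) z (k : ℤ)) ∧
    Summable (fun k : ℕ => jtpTerm (q : ℂ) z (-(k : ℤ) - 1)) ∧
    (∑' k : ℕ, jtpTerm (q : ℂ) z (k : ℤ)) +
        (∑' k : ℕ, jtpTerm (q : ℂ) z (-(k : ℤ) - 1)) =
      qpi (q : ℂ) (q : ℂ) * qpi (q : ℂ) z * qpi (q : ℂ) ((q : ℂ) / z) :=
  stmt12_general (Complex.ofReal_ne_zero.mpr hq0.ne')
    (by rwa [Complex.norm_real, Real.norm_of_nonneg hq0.le]) hz
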